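/- Let n ≥ 7 be an integer and let A be an n×n 0-1 matrix whose stable index is finite (i.e., some power of A is not a 0-1 matrix). Then θ(A) ≤ g(n). -/

import Mathlib

/-- A matrix over ℕ is a 0-1 matrix iff all its entries are at most 1. -/
def IsZO {α β : Type*} (A : Matrix α β ℕ) : Prop := ∀ i j, A i j ≤ 1

/-- The stable index of a 0-1 matrix: the smallest positive `k` with `A ^ (k+1)`
not a 0-1 matrix, or `⊤` if no such `k` exists. -/
noncomputable def theta {α : Type*} [Fintype α] [DecidableEq α]
    (A : Matrix α α ℕ) : ℕ∞ :=
  sInf ((fun k : ℕ => (k : ℕ∞)) '' {k : ℕ | 1 ≤ k ∧ ¬ IsZO (A ^ (k + 1))})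

/-- `g(n)` from the paper. -/
def g (n : ℕ) : ℕ :=
  if n % 2 = 1 then (n ^ 2 - 1) / 4
  else if n % 4 = 0 then (n ^ 2 - 4) / 4
  else (n ^ 2 - 16) / 4

/-- Basic circulant 0-1 matrix of order `n`. -/
def Cmat (n : ℕ) : Matrix (Fin n) (Fin n) ℕ :=
  Matrix.of fun i j => if (j : ℕ) = ((i : ℕ) + 1) % n then 1 else 0

/-- Condition (★) on `(n, p, q)`. -/
def StarCond (n p q : ℕ) : Prop :=
  p + q = n ∧
  ((n % 2 = 1 ∧ ({p, q} : Finset ℕ) = {(n + 1) / 2, (n - 1) / 2}) ∨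
   (n % 4 = 0 ∧ ({p, q} : Finset ℕ) = {(n + 2) / 2, (n - 2) / 2}) ∨
   (n % 4 = 2 ∧ ({p, q} : Finset ℕ) = {(n + 4) / 2, (n - 4) / 2}))

/-!
Think of `A` as a digraph. A power `A ^ (k + 1)` first fails to be a 0-1 matrix because of a
*fork*: two walks of length `k + 1` with the same endpoints and different first steps. Assume that
there is no fork of length at most `g n + 1`.

Two cycles through a common vertex, traversed in either order, would form a fork of length at
most `2 n - 1`, so the cycles are pairwise disjoint. A walk of length `d` from a cycle of length `p`
to another cycle, of length `q`, would form a fork of length `lcm p q + d`: go around one cycle or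
the other. Such a walk can be chosen with `d - 1` interior vertices off all cycles, and then
`d - 1 + p + q ≤ n`, so this is excluded by the elementary bound `lcm p q + n ≤ g n + p + q`, whose
extremal case is `p` and `q` coprime with `p + q = n`. Hence every walk visits at most one cycle,
and spends outside it at most as many steps as there are vertices off all cycles.

In a longer fork the two walks therefore stay on cycles, of lengths `p` and `q` say, for at least
`lcm p q` steps, and removing `lcm p q` steps from both leaves a shorter fork. By descent there is
no fork at all, and all powers of `A` are 0-1 matrices.
-/

open Function Relation

section Walk

variable {V : Type*} {r : V → V → Prop} {f : ℕ → V} {k l i j : ℕ} {x y z : V}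

/-- The digraph with arc relation `r` has a walk of length `k` from `x` to `y`. -/
def HasWalk (r : V → V → Prop) : ℕ → V → V → Prop
  | 0, x, y => x = y
  | k + 1, x, y => ∃ z, r x z ∧ HasWalk r k z y

/-- The vertices `f 0, …, f k` form a walk in the digraph `r`; later values of `f` are ignored. -/
def IsWalk (r : V → V → Prop) (k : ℕ) (f : ℕ → V) : Prop :=
  ∀ i < k, r (f i) (f (i + 1))

/-- Two walks of length `k + 1` with the same endpoints and different first steps. -/
def HasFork (r : V → V → Prop) (k : ℕ) : Prop :=
  ∃ x y a b, a ≠ b ∧ r x a ∧ r x b ∧ HasWalk r k a y ∧ HasWalk r k b y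

theorem HasWalk.cons (hxy : r x y) (hyz : HasWalk r k y z) : HasWalk r (k + 1) x z :=
  ⟨y, hxy, hyz⟩

theorem HasWalk.trans (hxy : HasWalk r k x y) (hyz : HasWalk r l y z) :
    HasWalk r (k + l) x z := by
  induction k generalizing x with
  | zero => cases hxy; rwa [Nat.zero_add]
  | succ k ih =>
    obtain ⟨w, hxw, hwy⟩ := hxy
    rw [Nat.add_right_comm]
    exact (ih hwy).cons hxw

theorem reflTransGen_iff_exists_hasWalk : ReflTransGen r x y ↔ ∃ k, HasWalk r k x y := by
  constructor
  · intro h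
    induction h using ReflTransGen.head_induction_on with
    | refl => exact ⟨0, rfl⟩
    | head hxz _ ih => exact ih.imp' (· + 1) fun _ hzy => hzy.cons hxz
  · rintro ⟨k, h⟩
    induction k generalizing x with
    | zero => cases h; rfl
    | succ k ih =>
      obtain ⟨z, hxz, hzy⟩ := h
      exact .head hxz (ih hzy)

theorem HasWalk.reflTransGen (h : HasWalk r k x y) : ReflTransGen r x y :=
  reflTransGen_iff_exists_hasWalk.2 ⟨k, h⟩

theorem HasWalk.exists_isWalk (h : HasWalk r k x y) : ∃ f, IsWalk r k f ∧ f 0 = x ∧ f k = y := by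
  induction k generalizing x with
  | zero => exact ⟨fun _ => x, by simp [IsWalk], rfl, h⟩
  | succ k ih =>
    obtain ⟨z, hxz, hzy⟩ := h
    obtain ⟨f, hf, rfl, hfk⟩ := ih hzy
    refine ⟨fun i => Nat.casesOn i x f, ?_, rfl, hfk⟩
    rintro (_ | i) hi
    · exact hxz
    · exact hf i (by lia)

theorem IsWalk.hasWalk (hf : IsWalk r k f) (hij : i ≤ j) (hj : j ≤ k) :
    HasWalk r (j - i) (f i) (f j) := by
  induction hij using Nat.decreasingInduction with
  | self => rw [Nat.sub_self]; rfl
  | of_succ i hij ih =>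
    rw [show j - i = j - (i + 1) + 1 by lia]
    exact ih.cons (hf i (by lia))

theorem IsWalk.reflTransGen (hf : IsWalk r k f) (hij : i ≤ j) (hj : j ≤ k) :
    ReflTransGen r (f i) (f j) :=
  (hf.hasWalk hij hj).reflTransGen

theorem HasWalk.exists_lt [Finite V] (h : HasWalk r k x y) (hk : Nat.card V ≤ k) :
    ∃ l < k, HasWalk r l x y := by
  obtain ⟨f, hf, rfl, rfl⟩ := h.exists_isWalk
  obtain ⟨i, hi, j, hj, hne, hfij⟩ :=
    Set.exists_ne_map_eq_of_ncard_lt_of_maps_to (s := Finset.Iic k) (t := Set.univ) (f := f)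
      (by rw [Set.ncard_coe_finset, Nat.card_Iic, Set.ncard_univ]; lia) (by simp)
  simp only [Finset.coe_Iic, Set.mem_Iic] at hi hj
  wlog hij : i < j generalizing i j
  · exact this j i hne.symm hfij.symm hj hi (by lia)
  have hw := (hf.hasWalk i.zero_le hi).trans (hfij ▸ hf.hasWalk hj le_rfl)
  exact ⟨_, by lia, hw⟩

theorem exists_hasWalk_lt_card [Finite V] (h : ReflTransGen r x y) :
    ∃ k < Nat.card V, HasWalk r k x y := by
  classical
  have hex := reflTransGen_iff_exists_hasWalk.1 h
  refine ⟨Nat.find hex, ?_, Nat.find_spec hex⟩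
  by_contra! hle
  obtain ⟨l, hl, hw⟩ := (Nat.find_spec hex).exists_lt hle
  exact Nat.find_min hex hl hw

theorem HasFork.pos (h : HasFork r k) : 0 < k := by
  rw [Nat.pos_iff_ne_zero]
  rintro rfl
  obtain ⟨_, _, _, _, hab, -, -, ha, hb⟩ := h
  exact hab (Eq.trans ha (Eq.symm hb))

end Walk

section Cycle

variable {V : Type*} {r : V → V → Prop} {f : ℕ → V} {k m i j : ℕ} {x y : V}

/-- The vertex `x` lies on a closed walk of positive length. -/
def OnCycle (r : V → V → Prop) (x : V) : Prop :=
  TransGen r x x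

/-- The vertices on no closed walk of positive length. -/
def acyclicPart (r : V → V → Prop) : Set V :=
  {x | ¬ OnCycle r x}

/-- The strongly connected component of `x`. -/
def strongComponent (r : V → V → Prop) (x : V) : Set V :=
  {y | ReflTransGen r x y ∧ ReflTransGen r y x}

open Classical in
/-- A successor of `x` on a closed walk through `x`, and `x` itself if there is no such walk.
The choice is unique if the cycles of `r` are pairwise disjoint, see `CyclesDisjoint`. -/
noncomputable def cycleNext (r : V → V → Prop) (x : V) : V :=
  if h : ∃ y, r x y ∧ ReflTransGen r y x then h.choose else x

theorem OnCycle.cycleNext_spec (hx : OnCycle r x) :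
    r x (cycleNext r x) ∧ ReflTransGen r (cycleNext r x) x := by
  have h := TransGen.head'_iff.1 hx
  rw [cycleNext, dif_pos h]
  exact h.choose_spec

theorem OnCycle.onCycle_cycleNext (hx : OnCycle r x) : OnCycle r (cycleNext r x) :=
  .tail' hx.cycleNext_spec.2 hx.cycleNext_spec.1

theorem OnCycle.hasWalk_iterate (hx : OnCycle r x) (k : ℕ) :
    HasWalk r k x ((cycleNext r)^[k] x) := by
  induction k generalizing x with
  | zero => rfl
  | succ k ih => exact (ih hx.onCycle_cycleNext).cons hx.cycleNext_spec.1

theorem OnCycle.of_mem_strongComponent (hx : OnCycle r x) (hy : y ∈ strongComponent r x) :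
    OnCycle r y :=
  .trans_right hy.2 (.trans_left hx hy.1)

theorem OnCycle.iterate_mem_strongComponent (hx : OnCycle r x) (k : ℕ) :
    (cycleNext r)^[k] x ∈ strongComponent r x := by
  refine ⟨(hx.hasWalk_iterate k).reflTransGen, ?_⟩
  induction k generalizing x with
  | zero => rfl
  | succ k ih => exact (ih hx.onCycle_cycleNext).trans hx.cycleNext_spec.2

theorem IsWalk.onCycle_of_eq (hf : IsWalk r k f) (hij : i < j) (hj : j ≤ k) (h : f i = f j) :
    OnCycle r (f i) :=
  .head' (hf i (by lia)) (h ▸ hf.reflTransGen hij hj)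

theorem IsWalk.injOn_acyclicPart (hf : IsWalk r k f) :
    Set.InjOn f {i | i ≤ k ∧ f i ∈ acyclicPart r} := by
  rintro i ⟨hi, hci⟩ j ⟨hj, hcj⟩ h
  by_contra hne
  rcases Nat.lt_or_gt_of_ne hne with hij | hij
  · exact hci (hf.onCycle_of_eq hij hj h)
  · exact hcj (hf.onCycle_of_eq hij hi h.symm)

theorem IsWalk.card_le_ncard_acyclicPart [Finite V] (hf : IsWalk r k f) {s : Finset ℕ}
    (hs : ∀ i ∈ s, i ≤ k ∧ f i ∈ acyclicPart r) : s.card ≤ (acyclicPart r).ncard := by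
  rw [← Set.ncard_coe_finset]
  exact Set.ncard_le_ncard_of_injOn f (fun i hi => (hs i hi).2) (hf.injOn_acyclicPart.mono hs)

theorem IsWalk.exists_onCycle_span [Finite V] (hf : IsWalk r k f)
    (hk : (acyclicPart r).ncard ≤ k) :
    ∃ i j, i ≤ j ∧ j ≤ k ∧ OnCycle r (f i) ∧ OnCycle r (f j) ∧
      k ≤ j - i + (acyclicPart r).ncard := by
  classical
  set s := (Finset.Iic k).filter fun i => OnCycle r (f i) with hs_def
  have mem_s {i : ℕ} : i ∈ s ↔ i ≤ k ∧ OnCycle r (f i) := by simp [hs_def]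
  have hs : s.Nonempty := by
    by_contra! hs
    have hoff : ∀ i ∈ Finset.Iic k, i ≤ k ∧ f i ∈ acyclicPart r := fun i hi =>
      ⟨Finset.mem_Iic.1 hi, fun hc => (Finset.eq_empty_iff_forall_notMem.1 hs) i
        (mem_s.2 ⟨Finset.mem_Iic.1 hi, hc⟩)⟩
    have hcard := hf.card_le_ncard_acyclicPart hoff
    rw [Nat.card_Iic] at hcard
    lia
  obtain ⟨-, hci⟩ := mem_s.1 (s.min'_mem hs)
  obtain ⟨hj, hcj⟩ := mem_s.1 (s.max'_mem hs)
  have hij := s.min'_le_max' hs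
  have hoff : ∀ i ∈ Finset.Iic k \ Finset.Icc (s.min' hs) (s.max' hs),
      i ≤ k ∧ f i ∈ acyclicPart r := by
    intro i hi
    rw [Finset.mem_sdiff, Finset.mem_Iic, Finset.mem_Icc] at hi
    refine ⟨hi.1, fun hc => hi.2 ?_⟩
    have his := mem_s.2 ⟨hi.1, hc⟩
    exact ⟨s.min'_le i his, s.le_max' i his⟩
  have hcard := hf.card_le_ncard_acyclicPart hoff
  rw [Finset.card_sdiff_of_subset fun i hi => Finset.mem_Iic.2 ((Finset.mem_Icc.1 hi).2.trans hj),
    Nat.card_Iic, Nat.card_Icc] at hcard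
  exact ⟨_, _, hij, hj, hci, hcj, by lia⟩

theorem OnCycle.minimalPeriod_le_ncard [Finite V] (hx : OnCycle r x) :
    minimalPeriod (cycleNext r) x ≤ (strongComponent r x).ncard := by
  rw [← Nat.card_Iio (minimalPeriod _ _), ← Set.ncard_coe_finset, Finset.coe_Iio]
  exact Set.ncard_le_ncard_of_injOn _ (fun i _ => hx.iterate_mem_strongComponent i)
    iterate_injOn_Iio_minimalPeriod

theorem OnCycle.disjoint_acyclicPart (hx : OnCycle r x) :
    Disjoint (acyclicPart r) (strongComponent r x) :=
  Set.disjoint_left.2 fun _ hz hzx => hz (hx.of_mem_strongComponent hzx)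

theorem OnCycle.ncard_acyclicPart_add_minimalPeriod_le [Finite V] (hx : OnCycle r x) :
    (acyclicPart r).ncard + minimalPeriod (cycleNext r) x ≤ Nat.card V := by
  have hcard := Set.ncard_le_card (acyclicPart r ∪ strongComponent r x)
  rw [Set.ncard_union_eq hx.disjoint_acyclicPart] at hcard
  have := hx.minimalPeriod_le_ncard
  lia

theorem disjoint_strongComponent (hxy : y ∉ strongComponent r x) :
    Disjoint (strongComponent r x) (strongComponent r y) :=
  Set.disjoint_left.2 fun _ hx hy => hxy ⟨hx.1.trans hy.2, hy.1.trans hx.2⟩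

theorem OnCycle.ncard_acyclicPart_add_minimalPeriod_add_le [Finite V] (hx : OnCycle r x)
    (hy : OnCycle r y) (hxy : y ∉ strongComponent r x) :
    (acyclicPart r).ncard + minimalPeriod (cycleNext r) x +
      minimalPeriod (cycleNext r) y ≤ Nat.card V := by
  have hcard := Set.ncard_le_card (acyclicPart r ∪ strongComponent r x ∪ strongComponent r y)
  rw [Set.ncard_union_eq (hy.disjoint_acyclicPart.union_left (disjoint_strongComponent hxy)),
    Set.ncard_union_eq hx.disjoint_acyclicPart] at hcard
  have := hx.minimalPeriod_le_ncard
  have := hy.minimalPeriod_le_ncard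
  lia

theorem exists_isWalk_between_cycles (hx : OnCycle r x) (hy : OnCycle r y)
    (hxy : HasWalk r k x y) (hyx : ¬ ReflTransGen r y x) :
    ∃ d f, IsWalk r (d + 1) f ∧ OnCycle r (f 0) ∧ OnCycle r (f (d + 1)) ∧
      ¬ ReflTransGen r (f (d + 1)) (f 0) ∧ ∀ i ∈ Finset.Icc 1 d, f i ∈ acyclicPart r := by
  induction k using Nat.strong_induction_on generalizing x y with
  | _ k ih =>
  obtain ⟨f, hf, rfl, rfl⟩ := hxy.exists_isWalk
  obtain ⟨d, rfl⟩ : ∃ d, k = d + 1 := Nat.exists_eq_succ_of_ne_zero (by rintro rfl; exact hyx .refl)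
  by_cases hint : ∀ i ∈ Finset.Icc 1 d, f i ∈ acyclicPart r
  · exact ⟨d, f, hf, hx, hy, hyx, hint⟩
  obtain ⟨i, hi, hci⟩ : ∃ i ∈ Finset.Icc 1 d, OnCycle r (f i) := by
    simpa [acyclicPart, and_assoc] using hint
  rw [Finset.mem_Icc] at hi
  by_cases hback : ReflTransGen r (f i) (f 0)
  · exact ih (d + 1 - i) (by lia) hci hy (hf.hasWalk (by lia) le_rfl)
      fun h => hyx (h.trans hback)
  · exact ih i (by lia) hx hci (hf.hasWalk i.zero_le (by lia)) hback

/-- Go around the first cycle and then along `f`, or along `f` and then around the second. -/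
theorem IsWalk.hasFork_of_isPeriodicPt {d : ℕ} (hf : IsWalk r (d + 1) f) (h₀ : OnCycle r (f 0))
    (h₁ : OnCycle r (f (d + 1))) (hne : f 1 ≠ cycleNext r (f 0))
    (hm₀ : IsPeriodicPt (cycleNext r) (m + 1) (f 0))
    (hm₁ : IsPeriodicPt (cycleNext r) (m + 1) (f (d + 1))) : HasFork r (m + (d + 1)) := by
  refine ⟨f 0, f (d + 1), cycleNext r (f 0), f 1, hne.symm, h₀.cycleNext_spec.1,
    hf 0 (by lia), ?_, ?_⟩
  · have hcyc := h₀.onCycle_cycleNext.hasWalk_iterate m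
    rw [← iterate_succ_apply, hm₀.eq] at hcyc
    exact hcyc.trans (hf.hasWalk (Nat.zero_le _) le_rfl)
  · have hcyc := h₁.hasWalk_iterate (m + 1)
    rw [hm₁.eq] at hcyc
    rw [show m + (d + 1) = d + (m + 1) by lia]
    exact (hf.hasWalk (i := 1) (by lia) le_rfl).trans hcyc

end Cycle

section Descent

variable {V : Type*} {r : V → V → Prop} {f : ℕ → V} {k m i j G : ℕ} {x y : V}

/-- The cycles of the digraph `r` are pairwise disjoint, in other words every vertex has at most
one successor in its strongly connected component. -/
def CyclesDisjoint (r : V → V → Prop) : Prop :=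
  ∀ ⦃x a b⦄, r x a → r x b → ReflTransGen r a x → ReflTransGen r b x → a = b

/-- No walk leads from a cycle of the digraph `r` to a cycle in another strongly connected
component. -/
def CyclesIsolated (r : V → V → Prop) : Prop :=
  ∀ ⦃x y⦄, OnCycle r x → OnCycle r y → ReflTransGen r x y → ReflTransGen r y x

/-- Whenever disjoint cycles of lengths `p` and `q` fit into `n` vertices, `G` is at least
`lcm p q` plus the number `n - p - q` of the remaining vertices. -/
def LcmBound (n G : ℕ) : Prop :=
  ∀ ⦃p q⦄, 0 < p → 0 < q → p + q ≤ n → p.lcm q + n ≤ G + p + q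

/-- If `a` and `b` follow `x` on two cycles, traverse the two cycles in either order, or just once
each if they have the same length. -/
theorem cyclesDisjoint_of_not_hasFork [Finite V]
    (h : ∀ k, k + 2 ≤ 2 * Nat.card V → ¬ HasFork r k) : CyclesDisjoint r := by
  intro x a b hxa hxb hax hbx
  by_contra hab
  obtain ⟨k, hk, wa⟩ := exists_hasWalk_lt_card hax
  obtain ⟨l, hl, wb⟩ := exists_hasWalk_lt_card hbx
  rcases eq_or_ne k l with rfl | hkl
  · exact h k (by lia) ⟨x, x, a, b, hab, hxa, hxb, wa, wb⟩
  · refine h (k + (l + 1)) (by lia) ⟨x, x, a, b, hab, hxa, hxb, wa.trans (wb.cons hxb), ?_⟩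
    rw [Nat.add_left_comm]
    exact wb.trans (wa.cons hxa)

theorem CyclesDisjoint.eq_iterate_of_hasWalk (hr : CyclesDisjoint r) (hxy : HasWalk r k x y)
    (hyx : ReflTransGen r y x) : y = (cycleNext r)^[k] x := by
  induction k generalizing x with
  | zero => exact hxy.symm
  | succ k ih =>
    obtain ⟨z, hxz, hzy⟩ := hxy
    have hzx := hzy.reflTransGen.trans hyx
    have hx := OnCycle.cycleNext_spec (.head' hxz hzx)
    obtain rfl := hr hxz hx.1 hzx hx.2
    exact ih hzy (hyx.tail hxz)

theorem CyclesDisjoint.mem_periodicPts (hr : CyclesDisjoint r) (hx : OnCycle r x) :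
    x ∈ periodicPts (cycleNext r) := by
  obtain ⟨y, hxy, hyx⟩ := TransGen.head'_iff.1 hx
  obtain ⟨k, hk⟩ := reflTransGen_iff_exists_hasWalk.1 hyx
  exact ⟨k + 1, k.succ_pos, (hr.eq_iterate_of_hasWalk (hk.cons hxy) .refl).symm⟩

theorem CyclesDisjoint.minimalPeriod_eq (hr : CyclesDisjoint r) (hx : OnCycle r x)
    (hy : y ∈ strongComponent r x) :
    minimalPeriod (cycleNext r) y = minimalPeriod (cycleNext r) x := by
  obtain ⟨k, hk⟩ := reflTransGen_iff_exists_hasWalk.1 hy.1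
  rw [hr.eq_iterate_of_hasWalk hk hy.2]
  exact minimalPeriod_apply_iterate (hr.mem_periodicPts hx) k

theorem CyclesDisjoint.lcm_minimalPeriod_pos (hr : CyclesDisjoint r) (hx : OnCycle r x)
    (hy : OnCycle r y) :
    0 < (minimalPeriod (cycleNext r) x).lcm (minimalPeriod (cycleNext r) y) :=
  Nat.lcm_pos (minimalPeriod_pos_of_mem_periodicPts (hr.mem_periodicPts hx))
    (minimalPeriod_pos_of_mem_periodicPts (hr.mem_periodicPts hy))

theorem CyclesDisjoint.lcm_minimalPeriod_add_le [Finite V] (hr : CyclesDisjoint r)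
    (hcard : Nat.card V ≤ G) (hlcm : LcmBound (Nat.card V) G) (hx : OnCycle r x)
    (hy : OnCycle r y) :
    (minimalPeriod (cycleNext r) x).lcm (minimalPeriod (cycleNext r) y) +
      (acyclicPart r).ncard ≤ G := by
  by_cases hxy : y ∈ strongComponent r x
  · rw [hr.minimalPeriod_eq hx hxy, Nat.lcm_self]
    have := hx.ncard_acyclicPart_add_minimalPeriod_le
    lia
  · have hle := hx.ncard_acyclicPart_add_minimalPeriod_add_le hy hxy
    have := hlcm (minimalPeriod_pos_of_mem_periodicPts (hr.mem_periodicPts hx))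
      (minimalPeriod_pos_of_mem_periodicPts (hr.mem_periodicPts hy)) (by lia)
    lia

theorem CyclesDisjoint.cyclesIsolated [Finite V] (hr : CyclesDisjoint r)
    (hcard : Nat.card V ≤ G) (hlcm : LcmBound (Nat.card V) G) (hG : ∀ k ≤ G, ¬ HasFork r k) :
    CyclesIsolated r := by
  intro x y hx hy hxy
  by_contra hyx
  obtain ⟨k, hk⟩ := reflTransGen_iff_exists_hasWalk.1 hxy
  obtain ⟨d, f, hf, h₀, h₁, hback, hint⟩ := exists_isWalk_between_cycles hx hy hk hyx
  have hne : f 1 ≠ cycleNext r (f 0) := by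
    intro h
    rcases Nat.eq_zero_or_pos d with rfl | hd
    · exact hback (h ▸ h₀.cycleNext_spec.2)
    · exact hint 1 (Finset.mem_Icc.2 ⟨le_rfl, hd⟩) (h ▸ h₀.onCycle_cycleNext)
  have hd : d ≤ (acyclicPart r).ncard := by
    simpa using hf.card_le_ncard_acyclicPart (s := Finset.Icc 1 d) fun i hi =>
      ⟨(Finset.mem_Icc.1 hi).2.trans d.le_succ, hint i hi⟩
  have hbound := hr.lcm_minimalPeriod_add_le hcard hlcm h₀ h₁
  obtain ⟨m, hm⟩ := Nat.exists_eq_add_one.2 (hr.lcm_minimalPeriod_pos h₀ h₁)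
  refine hG (m + (d + 1)) (by lia) (hf.hasFork_of_isPeriodicPt h₀ h₁ hne ?_ ?_) <;>
    rw [isPeriodicPt_iff_minimalPeriod_dvd, ← hm]
  exacts [Nat.dvd_lcm_left _ _, Nat.dvd_lcm_right _ _]

theorem CyclesDisjoint.hasWalk_sub_of_isPeriodicPt (hr : CyclesDisjoint r) (hf : IsWalk r k f)
    (hij : i ≤ j) (hj : j ≤ k) (hi : OnCycle r (f i)) (hji : ReflTransGen r (f j) (f i))
    (hm : IsPeriodicPt (cycleNext r) m (f i)) (hmij : m ≤ j - i) :
    HasWalk r (k - m) (f 0) (f k) := by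
  have hfj : f j = (cycleNext r)^[j - i - m] (f i) := by
    rw [hr.eq_iterate_of_hasWalk (hf.hasWalk hij hj) hji]
    conv_lhs => rw [← Nat.sub_add_cancel hmij, iterate_add_apply, hm.eq]
  have hw := (hf.hasWalk i.zero_le (hij.trans hj)).trans <|
    (hfj ▸ hi.hasWalk_iterate (j - i - m)).trans (hf.hasWalk hj le_rfl)
  rwa [show i - 0 + (j - i - m + (k - j)) = k - m by lia] at hw

theorem HasFork.exists_lt [Finite V] (hdisj : CyclesDisjoint r) (hisol : CyclesIsolated r)
    (hcard : Nat.card V ≤ G) (hlcm : LcmBound (Nat.card V) G) (hk : G ≤ k) (h : HasFork r k) :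
    ∃ l < k, HasFork r l := by
  obtain ⟨u, v, a, b, hab, hua, hub, wa, wb⟩ := h
  obtain ⟨f, hf, rfl, hfv⟩ := wa.exists_isWalk
  obtain ⟨f', hf', rfl, hfv'⟩ := wb.exists_isWalk
  have hacyclic : (acyclicPart r).ncard ≤ k := (Set.ncard_le_card _).trans (hcard.trans hk)
  obtain ⟨i, j, hij, hjk, hi, hj, hspan⟩ := hf.exists_onCycle_span hacyclic
  obtain ⟨i', j', hij', hjk', hi', hj', hspan'⟩ := hf'.exists_onCycle_span hacyclic
  have hpos := hdisj.lcm_minimalPeriod_pos hi hi'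
  have hbound := hdisj.lcm_minimalPeriod_add_le hcard hlcm hi hi'
  have hji := hisol hi hj (hf.reflTransGen hij hjk)
  have hji' := hisol hi' hj' (hf'.reflTransGen hij' hjk')
  refine ⟨_, Nat.sub_lt (by lia) hpos, u, v, f 0, f' 0, hab, hua, hub, ?_, ?_⟩
  · rw [← hfv]
    exact hdisj.hasWalk_sub_of_isPeriodicPt hf hij hjk hi hji
      (isPeriodicPt_iff_minimalPeriod_dvd.2 (Nat.dvd_lcm_left _ _)) (by lia)
  · rw [← hfv']
    exact hdisj.hasWalk_sub_of_isPeriodicPt hf' hij' hjk' hi' hji'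
      (isPeriodicPt_iff_minimalPeriod_dvd.2 (Nat.dvd_lcm_right _ _)) (by lia)

theorem HasFork.exists_le [Finite V] (hG : 2 * Nat.card V ≤ G + 2)
    (hlcm : LcmBound (Nat.card V) G) (h : HasFork r k) : ∃ l ≤ G, HasFork r l := by
  by_contra! hno
  have hcard : Nat.card V ≤ G := by
    obtain ⟨_, _, a, b, hab, -⟩ := h
    have : Nontrivial V := ⟨a, b, hab⟩
    have := Finite.one_lt_card (α := V)
    lia
  have hdisj := cyclesDisjoint_of_not_hasFork fun l hl => hno l (by lia)
  have hisol := hdisj.cyclesIsolated hcard hlcm hno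
  induction k using Nat.strong_induction_on with
  | _ k ih =>
  have hk : G ≤ k := le_of_not_ge fun hk => hno k hk h
  obtain ⟨l, hl, hfork⟩ := h.exists_lt hdisj hisol hcard hlcm hk
  exact ih l hl hfork

end Descent

section Power

variable {α β γ V : Type*} [Fintype β] [Fintype V] [DecidableEq V]

theorem not_isZO_mul {A : Matrix α β ℕ} {B : Matrix β γ ℕ} {x : α} {y : γ} {a b : β} (hab : a ≠ b)
    (ha : A x a ≠ 0 ∧ B a y ≠ 0) (hb : A x b ≠ 0 ∧ B b y ≠ 0) : ¬ IsZO (A * B) := by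
  intro h
  have hle := h x y
  rw [Matrix.mul_apply] at hle
  have := Finset.add_le_sum (f := fun j => A x j * B j y) (fun _ _ => Nat.zero_le _)
    (Finset.mem_univ a) (Finset.mem_univ b) hab
  have := Nat.pos_of_ne_zero (mul_ne_zero ha.1 ha.2)
  have := Nat.pos_of_ne_zero (mul_ne_zero hb.1 hb.2)
  lia

theorem exists_ne_of_not_isZO_mul {A : Matrix α β ℕ} {B : Matrix β γ ℕ} (hA : IsZO A) (hB : IsZO B)
    (h : ¬ IsZO (A * B)) :
    ∃ x y a b, a ≠ b ∧ (A x a ≠ 0 ∧ B a y ≠ 0) ∧ A x b ≠ 0 ∧ B b y ≠ 0 := by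
  classical
  simp only [IsZO, not_forall, not_le] at h
  obtain ⟨x, y, hxy⟩ := h
  rw [Matrix.mul_apply, ← Finset.sum_filter_ne_zero] at hxy
  have hcard := hxy.trans_le <| Finset.sum_le_card_nsmul _ _ 1
    fun j _ => Nat.mul_le_mul (hA x j) (hB j y)
  rw [smul_eq_mul, mul_one, Finset.one_lt_card] at hcard
  obtain ⟨a, ha, b, hb, hab⟩ := hcard
  simp only [Finset.mem_filter, Finset.mem_univ, true_and, mul_ne_zero_iff] at ha hb
  exact ⟨x, y, a, b, hab, ha, hb⟩

variable {A : Matrix V V ℕ} {k : ℕ}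

theorem pow_apply_ne_zero_iff_hasWalk {R : Type*} [Semiring R] [PartialOrder R]
    [IsOrderedAddMonoid R] [CanonicallyOrderedAdd R] [NoZeroDivisors R] [Nontrivial R]
    {A : Matrix V V R} {x y : V} :
    (A ^ k) x y ≠ 0 ↔ HasWalk (fun i j => A i j ≠ 0) k x y := by
  induction k generalizing x with
  | zero => simp [HasWalk, Matrix.one_apply]
  | succ k ih => simp [HasWalk, pow_succ', Matrix.mul_apply, ← ih]

theorem HasFork.not_isZO_pow (h : HasFork (fun i j => A i j ≠ 0) k) : ¬ IsZO (A ^ (k + 1)) := by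
  obtain ⟨x, y, a, b, hab, hxa, hxb, wa, wb⟩ := h
  rw [← pow_apply_ne_zero_iff_hasWalk] at wa wb
  rw [pow_succ']
  exact not_isZO_mul hab ⟨hxa, wa⟩ ⟨hxb, wb⟩

theorem exists_hasFork_of_not_isZO_pow (hA : IsZO A) (h : ¬ IsZO (A ^ k)) :
    ∃ l, HasFork (fun i j => A i j ≠ 0) l := by
  induction k with
  | zero => exact absurd (fun i j => by rw [pow_zero, Matrix.one_apply]; split <;> simp) h
  | succ k ih =>
    by_cases hk : IsZO (A ^ k)
    · rw [pow_succ'] at h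
      obtain ⟨x, y, a, b, hab, ⟨hxa, hay⟩, hxb, hby⟩ := exists_ne_of_not_isZO_mul hA hk h
      rw [pow_apply_ne_zero_iff_hasWalk] at hay hby
      exact ⟨k, x, y, a, b, hab, hxa, hxb, hay, hby⟩
    · exact ih hk

theorem exists_hasFork_of_theta_ne_top (hA : IsZO A) (h : theta A ≠ ⊤) :
    ∃ k, HasFork (fun i j => A i j ≠ 0) k := by
  have : ∃ k, 1 ≤ k ∧ ¬ IsZO (A ^ (k + 1)) := by simpa [theta, sInf_eq_top] using h
  obtain ⟨k, -, hk⟩ := this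
  exact exists_hasFork_of_not_isZO_pow hA hk

theorem HasFork.theta_le (h : HasFork (fun i j => A i j ≠ 0) k) : theta A ≤ k :=
  sInf_le ⟨k, ⟨h.pos, h.not_isZO_pow⟩, rfl⟩

end Power

section Arithmetic

variable {n p q : ℕ}

theorem four_mul_g (hn : 4 ≤ n) :
    4 * g n + (if n % 2 = 1 then 1 else if n % 4 = 0 then 4 else 16) = n ^ 2 := by
  have hsq : 4 * 4 ≤ n ^ 2 := by nlinarith
  obtain ⟨c, rfl | rfl⟩ := n.even_or_odd'
  · have : (2 * c) ^ 2 = 4 * c ^ 2 := by ring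
    unfold g
    split_ifs <;> lia
  · have : (2 * c + 1) ^ 2 = 4 * (c ^ 2 + c) + 1 := by ring
    unfold g
    split_ifs <;> lia

theorem two_mul_le_g_add_two (hn : 7 ≤ n) : 2 * n ≤ g n + 2 := by
  have hg := four_mul_g (n := n) (by lia)
  split_ifs at hg with hodd h4
  · nlinarith
  · have : 8 ≤ n := by lia
    nlinarith
  · have : 10 ≤ n := by lia
    nlinarith

theorem two_mul_lcm_le_mul_of_not_coprime (hp : 0 < p) (hpq : ¬ p.Coprime q) :
    2 * p.lcm q ≤ p * q := by
  rw [← Nat.gcd_mul_lcm p q]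
  have := Nat.gcd_pos_of_pos_left q hp
  exact Nat.mul_le_mul_right _ (by rw [Nat.coprime_iff_gcd_eq_one] at hpq; lia)

theorem mul_le_g_of_coprime (hpq : p.Coprime q) (hn : 7 ≤ p + q) : p * q ≤ g (p + q) := by
  wlog hle : p ≤ q generalizing p q
  · rw [mul_comm, add_comm]
    exact this hpq.symm (by lia) (by lia)
  obtain ⟨e, rfl⟩ := Nat.exists_eq_add_of_le hle
  have hg := four_mul_g (n := p + (p + e)) (by lia)
  have hsq : (p + (p + e)) ^ 2 = 4 * (p * (p + e)) + e ^ 2 := by ring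
  have he : e ≠ 0 := by
    rintro rfl
    have : p = 1 := by simpa using hpq
    lia
  have hodd : ¬ (2 ∣ p ∧ 2 ∣ p + e) := fun h => Nat.not_coprime_of_dvd_of_dvd one_lt_two h.1 h.2 hpq
  split_ifs at hg with h2 h4
  · lia
  · have : 2 ≤ e := by lia
    nlinarith
  · -- Both `p` and `q` are odd, so their sum is `2` mod `4` only if they agree mod `4`.
    have : 4 ≤ e := by lia
    nlinarith

theorem lcm_le_g (hp : 0 < p) (hn : 7 ≤ p + q) : p.lcm q ≤ g (p + q) := by
  by_cases hpq : p.Coprime q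
  · rw [hpq.lcm_eq_mul]
    exact mul_le_g_of_coprime hpq hn
  · have hlcm := two_mul_lcm_le_mul_of_not_coprime hp hpq
    have hamgm := four_mul_le_sq_add p q
    have hg := four_mul_g (n := p + q) (by lia)
    have : 7 * 7 ≤ (p + q) ^ 2 := by nlinarith
    split_ifs at hg <;> lia

theorem lcm_add_le_g_add_add (hp : 0 < p) (hq : 0 < q) (hn : 7 ≤ n) (hpq : p + q < n) :
    p.lcm q + n ≤ g n + p + q := by
  have hlcm : p.lcm q ≤ p * q := Nat.le_of_dvd (by positivity) (Nat.lcm_dvd_mul p q)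
  have hamgm := four_mul_le_sq_add p q
  have hg := four_mul_g (n := n) (by lia)
  have hsq : 4 * (p.lcm q + n) + 2 * n ≤ n ^ 2 + 5 + 4 * (p + q) := by
    obtain ⟨i, rfl⟩ := Nat.exists_eq_add_of_lt hpq
    have : 2 * i ≤ (p + q) * i := Nat.mul_le_mul_right i (by lia)
    nlinarith
  split_ifs at hg <;> lia

theorem lcmBound_g (hn : 7 ≤ n) : LcmBound n (g n) := by
  intro p q hp hq hpq
  rcases hpq.eq_or_lt with rfl | hlt
  · have := lcm_le_g hp hn
    lia
  · exact lcm_add_le_g_add_add hp hq hn hlt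

end Arithmetic

theorem stmt_0_general {V : Type*} [Fintype V] [DecidableEq V] (hV : 7 ≤ Fintype.card V)
    (A : Matrix V V ℕ) (hA : IsZO A) (hfin : theta A ≠ ⊤) :
    theta A ≤ (g (Fintype.card V) : ℕ∞) := by
  rw [← Nat.card_eq_fintype_card] at hV ⊢
  obtain ⟨k, hk⟩ := exists_hasFork_of_theta_ne_top hA hfin
  obtain ⟨l, hl, hfork⟩ := hk.exists_le (two_mul_le_g_add_two hV) (lcmBound_g hV)
  exact hfork.theta_le.trans (by exact_mod_cast hl)

/-- For `n ≥ 7` and an `n × n` 0-1 matrix `A` with finite stable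
index, `θ(A) ≤ g(n)`. -/
theorem stmt_0 (n : ℕ) (hn : 7 ≤ n) (A : Matrix (Fin n) (Fin n) ℕ)
    (hA : IsZO A) (hfin : theta A ≠ ⊤) :
    theta A ≤ (g n : ℕ∞) := by
  simpa using stmt_0_general (by simpa using hn) A hA hfin
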